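/- The set of pairs (x,y) ∈ ℚ × ℚ satisfying y² = (x² + 1)(x⁸ − 8x⁵ + 2x⁴ + 8x³ + 1)(x² − 2x − 1)(x⁶ − 3x⁴ − 16x³ + 3x² − 1) is exactly {(1, 16), (1, −16), (−1, 16), (−1, −16), (0, 1), (0, −1)}. -/

import Mathlib

lemma sq_split {a b c : ℤ} (hab : IsCoprime a b) (h : a * b = c ^ 2) :
    ∃ g e : ℤ, c = g * e ∧ ((a = g ^ 2 ∧ b = e ^ 2) ∨ (a = -g ^ 2 ∧ b = -e ^ 2)) := by
  obtain ⟨g, hg⟩ := Int.sq_of_isCoprime hab h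
  obtain ⟨e, he⟩ := Int.sq_of_isCoprime hab.symm (by rw [mul_comm]; exact h)
  have key : ∃ g e : ℤ, c ^ 2 = (g * e) ^ 2 ∧
      ((a = g ^ 2 ∧ b = e ^ 2) ∨ (a = -g ^ 2 ∧ b = -e ^ 2)) := by
    have mixed : c ^ 2 = -(g * e) ^ 2 → g = 0 ∨ e = 0 := by
      intro h1
      have : g * e = 0 := by
        have : (g * e) ^ 2 = 0 := by nlinarith [sq_nonneg (g * e), sq_nonneg c]
        exact pow_eq_zero_iff (two_ne_zero) |>.1 this
      exact mul_eq_zero.1 this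
    rcases hg with hg | hg <;> rcases he with he | he
    · exact ⟨g, e, by rw [← h, hg, he]; ring, Or.inl ⟨hg, he⟩⟩
    · have h1 : c ^ 2 = -(g * e) ^ 2 := by rw [← h, hg, he]; ring
      refine ⟨g, e, ?_, ?_⟩
      · rcases mixed h1 with h0 | h0 <;> · rw [h1, h0]; ring
      · rcases mixed h1 with h0 | h0
        · right; simp [hg, he, h0]
        · left; simp [hg, he, h0]
    · have h1 : c ^ 2 = -(g * e) ^ 2 := by rw [← h, hg, he]; ring
      refine ⟨g, e, ?_, ?_⟩
      · rcases mixed h1 with h0 | h0 <;> · rw [h1, h0]; ring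
      · rcases mixed h1 with h0 | h0
        · left; simp [hg, he, h0]
        · right; simp [hg, he, h0]
    · exact ⟨g, e, by rw [← h, hg, he]; ring, Or.inr ⟨hg, he⟩⟩
  obtain ⟨g, e, h1, h2⟩ := key
  rcases sq_eq_sq_iff_eq_or_eq_neg.1 h1 with h1 | h1
  · exact ⟨g, e, h1, h2⟩
  · exact ⟨-g, e, by rw [h1]; ring, by simpa using h2⟩

lemma fourth_aux {P Q N : ℤ} (hP : 0 ≤ P) (hPQ : IsCoprime P Q) (h : P * Q = N ^ 4) :
    ∃ a : ℤ, P = a ^ 4 := by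
  obtain ⟨a, ha⟩ := exists_associated_pow_of_mul_eq_pow' hPQ h
  rcases Int.associated_iff.1 ha with h1 | h1
  · exact ⟨a, h1.symm⟩
  · have : 0 ≤ a ^ 4 := by positivity
    exact ⟨0, by linarith⟩

lemma fourth_split1 {P Q N : ℤ} (hP : 0 ≤ P) (hQ : 0 ≤ Q) (hc : IsCoprime P Q)
    (h5 : (5 : ℤ) ∣ Q) (h : P * Q = 5 * N ^ 4) :
    ∃ a b : ℤ, IsCoprime a b ∧ N ^ 2 = a ^ 2 * b ^ 2 ∧ P + Q = a ^ 4 + 5 * b ^ 4 := by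
  obtain ⟨R, rfl⟩ := h5
  have h1 : P * R = N ^ 4 := by linarith
  have hc1 : IsCoprime P R := hc.of_mul_right_right
  obtain ⟨a, ha⟩ := fourth_aux hP hc1 h1
  obtain ⟨b, hb⟩ := fourth_aux (N := N) (by linarith) hc1.symm (by linarith)
  refine ⟨a, b, ?_, ?_, by rw [ha, hb]⟩
  · rw [ha, hb] at hc1
    exact (IsCoprime.pow_iff (by norm_num) (by norm_num)).1 hc1
  · have : (N ^ 2) ^ 2 = (a ^ 2 * b ^ 2) ^ 2 := by
      rw [ha, hb] at h1; linarith
    exact (sq_eq_sq₀ (by positivity) (by positivity)).1 this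

lemma fourth_split {P Q N : ℤ} (hs : 0 ≤ P + Q) (hc : IsCoprime (P + Q) N)
    (h : P * Q = 5 * N ^ 4) :
    ∃ a b : ℤ, IsCoprime a b ∧ N ^ 2 = a ^ 2 * b ^ 2 ∧ P + Q = a ^ 4 + 5 * b ^ 4 := by
  have hN : 0 ≤ 5 * N ^ 4 := by positivity
  have p5 : Prime (5 : ℤ) := Int.prime_iff_natAbs_prime.2 (by norm_num)
  have hP : 0 ≤ P := by
    by_contra hP
    push Not at hP
    nlinarith
  have hQ : 0 ≤ Q := by
    by_contra hQ
    push Not at hQ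
    nlinarith
  have hPQ : IsCoprime P Q := by
    apply isCoprime_of_prime_dvd
    · rintro ⟨rfl, rfl⟩
      have : N = 0 := by
        have : N ^ 4 = 0 := by linarith
        exact pow_eq_zero_iff (by norm_num) |>.1 this
      subst this
      obtain ⟨u, v, huv⟩ := hc
      simp at huv
    · rintro z hz ⟨P', rfl⟩ ⟨Q', rfl⟩
      have hzN : z ∣ N := by
        have h5 : z ∣ 5 * N ^ 4 := ⟨P' * (z * Q'), by rw [← h]; ring⟩
        rcases hz.dvd_or_dvd h5 with h5 | h5
        · obtain ⟨w, hw⟩ := h5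
          have hu : IsUnit w := by
            rcases p5.irreducible.isUnit_or_isUnit hw with h6 | h6
            · exact absurd h6 hz.not_isUnit
            · exact h6
          have h7 : z * (P' * Q') = w * N ^ 4 := by
            have : z * (z * (P' * Q')) = z * (w * N ^ 4) := by
              rw [← mul_assoc z w, ← hw, ← h]; ring
            exact mul_left_cancel₀ hz.ne_zero this
          have h8 : z ∣ w * N ^ 4 := ⟨_, h7.symm⟩
          exact hz.dvd_of_dvd_pow ((hu.dvd_mul_left).1 h8)
        · exact hz.dvd_of_dvd_pow h5
      exact hz.not_isUnit (hc.isUnit_of_dvd' ⟨P' + Q', by ring⟩ hzN)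
  have h5 : (5 : ℤ) ∣ P * Q := ⟨N ^ 4, h⟩
  rcases p5.dvd_or_dvd h5 with h5 | h5
  · obtain ⟨a, b, h1, h2, h3⟩ := fourth_split1 (N := N) hQ hP hPQ.symm h5 (by linarith)
    exact ⟨a, b, h1, h2, by linarith⟩
  · exact fourth_split1 hP hQ hPQ h5 h

lemma coprime_sq_sub {a b : ℤ} (h : IsCoprime a b) : IsCoprime (a ^ 2 - b ^ 2) (b ^ 2) := by
  have h1 : IsCoprime (a ^ 2) (b ^ 2) := h.pow
  have h2 := h1.add_mul_left_left (-1)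
  have e : a ^ 2 + b ^ 2 * (-1) = a ^ 2 - b ^ 2 := by ring
  rwa [e] at h2

lemma coprime_two_of_odd {a : ℤ} (h : a % 2 = 1) : IsCoprime a 2 :=
  ⟨1, -(a / 2), by omega⟩

lemma coprime_sub_add {r s : ℤ} (h : IsCoprime r s)
    (hp : r % 2 = 0 ∧ s % 2 = 1 ∨ r % 2 = 1 ∧ s % 2 = 0) : IsCoprime (r + s) (r - s) := by
  have h1 : IsCoprime (r + s) s := by simpa using h.add_mul_left_left 1
  have h2 : IsCoprime (r + s) 2 := coprime_two_of_odd (by omega)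
  have h3 : IsCoprime (r + s) (2 * s) := h2.mul_right h1
  have h4 := (h3.neg_right).add_mul_left_right 1
  have e : -(2 * s) + (r + s) * 1 = r - s := by ring
  rwa [e] at h4

lemma odd_sq_mod {a : ℤ} (h : a % 2 = 1) : a ^ 2 % 8 = 1 := by
  have : a % 8 = 1 ∨ a % 8 = 3 ∨ a % 8 = 5 ∨ a % 8 = 7 := by omega
  rcases this with h | h | h | h <;> simp [pow_two, Int.mul_emod, h]

set_option maxHeartbeats 1000000 in
lemma descent (M : ℕ) : ∀ m n k : ℤ, m.natAbs = M → IsCoprime m n →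
    m ^ 4 + m ^ 2 * n ^ 2 - n ^ 4 = k ^ 2 → n = 0 ∨ m ^ 2 = n ^ 2 := by
  induction M using Nat.strong_induction_on with
  | _ M ih =>
  intro m n k hM hmn hk
  by_cases hm0 : m = 0
  · subst hm0
    left
    have : n ^ 4 = 0 := by nlinarith [sq_nonneg k, sq_nonneg (n ^ 2)]
    exact pow_eq_zero_iff (by norm_num) |>.1 this
  have hmpos : 0 < |m| := abs_pos.2 hm0
  have hmm : |m| * |m| = m * m := abs_mul_abs_self m
  rcases Int.emod_two_eq_zero_or_one n with hn | hn
  · -- `n` even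
    left
    obtain ⟨N, rfl⟩ : ∃ N, n = 2 * N := ⟨n / 2, by omega⟩
    have hm2 : m % 2 = 1 := by
      have := hmn.of_mul_right_left
      obtain ⟨u, v, huv⟩ := this
      rcases Int.emod_two_eq_zero_or_one m with h | h
      · exfalso
        have : u * m % 2 = 0 := by simp [Int.mul_emod, h]
        omega
      · exact h
    have hmN : IsCoprime m N := hmn.of_mul_right_right
    have hm8 := odd_sq_mod hm2
    have hkodd : k % 2 = 1 := by
      rcases Int.emod_two_eq_zero_or_one k with h | h
      · exfalso
        have h1 : m ^ 4 % 2 = 1 := by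
          simp [pow_succ, Int.mul_emod, hm2]
        have h2 : k ^ 2 % 2 = 0 := by simp [pow_two, Int.mul_emod, h]
        have h3 : m ^ 4 + 2 * (2 * m ^ 2 * N ^ 2 - 8 * N ^ 4) = k ^ 2 := by
          rw [← hk]; ring
        omega
      · exact h
    obtain ⟨P, hP⟩ : ∃ P, k = m ^ 2 + 2 * N ^ 2 - 2 * P :=
      ⟨(m ^ 2 + 2 * N ^ 2 - k) / 2, by omega⟩
    have hPQ : P * (m ^ 2 + 2 * N ^ 2 - P) = 5 * N ^ 4 := by
      rw [hP] at hk; linarith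
    have hsum : P + (m ^ 2 + 2 * N ^ 2 - P) = m ^ 2 + 2 * N ^ 2 := by ring
    have hcs : IsCoprime (m ^ 2 + 2 * N ^ 2) N := by
      have h1 : IsCoprime (m ^ 2) N := hmN.pow_left
      have h2 := h1.add_mul_left_left (2 * N)
      have e : m ^ 2 + N * (2 * N) = m ^ 2 + 2 * N ^ 2 := by ring
      rwa [e] at h2
    obtain ⟨a, b, hab, hN2, hs⟩ := fourth_split (by rw [hsum]; positivity)
      (by rw [hsum]; exact hcs) hPQ
    rw [hsum] at hs
    have hpy : PythagoreanTriple (a ^ 2 - b ^ 2) (2 * b ^ 2) |m| := by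
      unfold PythagoreanTriple
      linarith
    have hodd : (a ^ 2 - b ^ 2) % 2 = 1 := by
      rcases Int.emod_two_eq_zero_or_one (a ^ 2 - b ^ 2) with h | h
      · exfalso
        obtain ⟨w, hw⟩ : ∃ w, a ^ 2 - b ^ 2 = 2 * w := ⟨(a ^ 2 - b ^ 2) / 2, by omega⟩
        have h1 : m ^ 2 = 2 * (2 * w ^ 2 + 2 * b ^ 4) := by
          have : m ^ 2 = (a ^ 2 - b ^ 2) ^ 2 + 4 * b ^ 4 := by linarith
          rw [this, hw]; ring
        omega
      · exact h
    have hg : Int.gcd (a ^ 2 - b ^ 2) (2 * b ^ 2) = 1 :=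
      Int.isCoprime_iff_gcd_eq_one.1
        ((coprime_two_of_odd hodd).mul_right (coprime_sq_sub hab))
    obtain ⟨r, s, h1, h2, h3, h4, h5, -⟩ := hpy.coprime_classification' hg hodd hmpos
    have hrs : r * s = b ^ 2 := by linarith
    obtain ⟨g, e, hb, hge⟩ := sq_split (Int.isCoprime_iff_gcd_eq_one.2 h4) hrs
    have hr2 : r ^ 2 = g ^ 4 := by rcases hge with h | h <;> rw [h.1] <;> ring
    have hs2 : s ^ 2 = e ^ 4 := by rcases hge with h | h <;> rw [h.2] <;> ring
    have hcop : IsCoprime g e := by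
      have h := Int.isCoprime_iff_gcd_eq_one.2 h4
      have h' : IsCoprime (r ^ 2) (s ^ 2) := h.pow
      rw [hr2, hs2] at h'
      exact (IsCoprime.pow_iff (by norm_num) (by norm_num)).1 h'
    have hnew : g ^ 4 + g ^ 2 * e ^ 2 - e ^ 4 = a ^ 2 := by
      rw [← hr2, ← hs2]
      have : g ^ 2 * e ^ 2 = b ^ 2 := by rw [hb]; ring
      linarith
    have he : e = 0 := by
      by_contra he
      have he1 : 1 ≤ e ^ 4 := by
        have : 0 < e ^ 4 := by positivity
        linarith
      have hg1 : |g| ≤ g ^ 4 := by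
        have h6 : g ^ 4 = |g| ^ 4 := by rw [← abs_pow, abs_of_nonneg (by positivity)]
        rw [h6]
        rcases (abs_nonneg g).eq_or_lt with h0 | h0
        · rw [← h0]; norm_num
        · exact le_self_pow₀ (by omega) (by norm_num)
      have hlt : g.natAbs < M := by
        have : |g| < |m| := by rw [h3, hr2, hs2]; linarith
        rw [Int.abs_eq_natAbs, Int.abs_eq_natAbs] at this
        omega
      rcases ih g.natAbs hlt g e a rfl hcop hnew with h | h
      · exact he h
      · rcases hge with h' | h'
        · have : r = s := by linarith
          omega
        · have : r = s := by linarith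
          omega
    have hb0 : b = 0 := by rw [hb, he]; ring
    rw [hb0] at hN2
    have : N = 0 := pow_eq_zero_iff (two_ne_zero) |>.1 (by linarith)
    rw [this]; ring
  · -- `n` odd
    right
    have hn8 := odd_sq_mod hn
    have hPQ : (2 * m ^ 2 + n ^ 2 - 2 * k) * (2 * m ^ 2 + n ^ 2 + 2 * k) = 5 * n ^ 4 := by
      linarith
    have hsum : (2 * m ^ 2 + n ^ 2 - 2 * k) + (2 * m ^ 2 + n ^ 2 + 2 * k)
        = 4 * m ^ 2 + 2 * n ^ 2 := by ring
    have hcs : IsCoprime (4 * m ^ 2 + 2 * n ^ 2) n := by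
      have h1 : IsCoprime (m ^ 2) n := hmn.pow_left
      have h0 : IsCoprime 2 n := (coprime_two_of_odd hn).symm
      have h2 := ((h0.mul_left h0).mul_left h1).add_mul_left_left (2 * n)
      have e : 2 * 2 * m ^ 2 + n * (2 * n) = 4 * m ^ 2 + 2 * n ^ 2 := by ring
      rwa [e] at h2
    obtain ⟨a, b, hab, hN2, hs⟩ := fourth_split (by rw [hsum]; positivity)
      (by rw [hsum]; exact hcs) hPQ
    rw [hsum] at hs
    have hprod : (a * b) % 2 = 1 := by
      rcases Int.emod_two_eq_zero_or_one (a * b) with h | h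
      · exfalso
        obtain ⟨w, hw⟩ : ∃ w, a * b = 2 * w := ⟨(a * b) / 2, by omega⟩
        have h1 : n ^ 2 = 2 * (2 * w ^ 2) := by
          rw [hN2, ← mul_pow, hw]; ring
        omega
      · exact h
    have ha : a % 2 = 1 := by
      rcases Int.emod_two_eq_zero_or_one a with h | h
      · simp [Int.mul_emod, h] at hprod
      · exact h
    have hb : b % 2 = 1 := by
      rcases Int.emod_two_eq_zero_or_one b with h | h
      · simp [Int.mul_emod, h] at hprod
      · exact h
    have ha8 := odd_sq_mod ha
    have hb8 := odd_sq_mod hb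
    obtain ⟨d, hd⟩ : ∃ d, a ^ 2 - b ^ 2 = 2 * d := ⟨(a ^ 2 - b ^ 2) / 2, by omega⟩
    have hpy : PythagoreanTriple (b ^ 2) d |m| := by
      unfold PythagoreanTriple
      have h1 : 4 * m ^ 2 = (a ^ 2 - b ^ 2) ^ 2 + 4 * b ^ 4 := by linarith
      rw [hd] at h1
      linarith
    have hcd : IsCoprime (b ^ 2) d := by
      have h := (coprime_sq_sub hab).symm
      rw [hd] at h
      exact h.of_mul_right_right
    obtain ⟨r, s, h1, h2, h3, h4, h5, -⟩ := hpy.coprime_classification'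
      (Int.isCoprime_iff_gcd_eq_one.1 hcd) (by omega) hmpos
    have hrs : (r + s) * (r - s) = b ^ 2 := by linarith
    obtain ⟨g, e, hbe, hge⟩ := sq_split
      (coprime_sub_add (Int.isCoprime_iff_gcd_eq_one.2 h4) h5) hrs
    have hr2 : (r + s) ^ 2 = g ^ 4 := by rcases hge with h | h <;> rw [h.1] <;> ring
    have hs2 : (r - s) ^ 2 = e ^ 4 := by rcases hge with h | h <;> rw [h.2] <;> ring
    have hcop : IsCoprime g e := by
      have h := coprime_sub_add (Int.isCoprime_iff_gcd_eq_one.2 h4) h5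
      have h' : IsCoprime ((r + s) ^ 2) ((r - s) ^ 2) := h.pow
      rw [hr2, hs2] at h'
      exact (IsCoprime.pow_iff (by norm_num) (by norm_num)).1 h'
    have hnew : g ^ 4 + g ^ 2 * e ^ 2 - e ^ 4 = a ^ 2 := by
      rw [← hr2, ← hs2]
      have : g ^ 2 * e ^ 2 = b ^ 2 := by rw [hbe]; ring
      linarith
    have hm4 : 2 * |m| = g ^ 4 + e ^ 4 := by rw [h3, ← hr2, ← hs2]; ring
    have hb0 : b ≠ 0 := by omega
    have he0 : e ≠ 0 := by rintro rfl; simp at hbe; exact hb0 hbe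
    have hg0 : g ≠ 0 := by rintro rfl; simp at hbe; exact hb0 hbe
    have hg1 : 1 ≤ |g| := Int.one_le_abs hg0
    have he1 : 1 ≤ |e| := Int.one_le_abs he0
    have hg4 : g ^ 4 = |g| ^ 4 := by rw [← abs_pow, abs_of_nonneg (by positivity)]
    have he4 : e ^ 4 = |e| ^ 4 := by rw [← abs_pow, abs_of_nonneg (by positivity)]
    have hge2 : g ^ 2 = e ^ 2 := by
      by_cases hlt : g.natAbs < M
      · rcases ih g.natAbs hlt g e a rfl hcop hnew with h | h
        · exact absurd h he0
        · exact h
      · have hle : |m| ≤ |g| := by rw [Int.abs_eq_natAbs, Int.abs_eq_natAbs]; omega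
        have hgg : |g| = 1 := by
          by_contra hne
          have h2g : 2 ≤ |g| := by omega
          have : 2 ^ 3 * |g| ≤ |g| ^ 4 := by
            have : (2:ℤ) ^ 3 ≤ |g| ^ 3 := pow_le_pow_left₀ (by norm_num) h2g 3
            nlinarith
          have : 0 ≤ e ^ 4 := by positivity
          linarith
        have hee : |e| = 1 := by
          by_contra hne
          have h2e : 2 ≤ |e| := by omega
          have : (2:ℤ) ^ 4 ≤ |e| ^ 4 := pow_le_pow_left₀ (by norm_num) h2e 4
          rw [hgg] at hg4
          linarith
        exact sq_eq_sq_iff_abs_eq_abs _ _ |>.2 (by rw [hgg, hee])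
    have hu : IsUnit (g ^ 2) := by
      have h : IsCoprime (g ^ 2) (e ^ 2) := hcop.pow
      rw [← hge2] at h
      exact isCoprime_self.1 h
    have hg21 : g ^ 2 = 1 := by
      rcases Int.isUnit_iff.1 hu with h | h
      · exact h
      · have := sq_nonneg g
        linarith
    have he21 : e ^ 2 = 1 := by rw [← hge2]; exact hg21
    have hg41 : g ^ 4 = 1 := by
      calc g ^ 4 = (g ^ 2) ^ 2 := by ring
        _ = 1 := by rw [hg21]; norm_num
    have he41 : e ^ 4 = 1 := by
      calc e ^ 4 = (e ^ 2) ^ 2 := by ring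
        _ = 1 := by rw [he21]; norm_num
    have ha1 : a ^ 2 = 1 := by rw [← hnew, hg41, he41, hg21, he21]; norm_num
    have hb1 : b ^ 2 = 1 := by rw [hbe, mul_pow, hg21, he21]; norm_num
    have hm1 : |m| = 1 := by linarith
    rw [hN2, ha1, hb1, ← sq_abs, hm1]; norm_num

lemma quartic_points {T S z : ℤ} (hc : IsCoprime T S)
    (h : T ^ 4 + 4 * S ^ 2 * (T - S) ^ 2 = z ^ 2) : T = 0 ∨ S = 0 ∨ T = S := by
  by_cases hT0 : T = 0
  · exact Or.inl hT0
  have hT4 : 0 < T ^ 4 := by positivity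
  rcases Int.emod_two_eq_zero_or_one T with hT | hT
  · exfalso
    obtain ⟨U, rfl⟩ : ∃ U, T = 2 * U := ⟨T / 2, by omega⟩
    have hS : S % 2 = 1 := by
      obtain ⟨u, v, huv⟩ := hc.of_mul_left_left
      rcases Int.emod_two_eq_zero_or_one S with h | h
      · exfalso
        have : v * S % 2 = 0 := by simp [Int.mul_emod, h]
        omega
      · exact h
    have hUS : IsCoprime U S := hc.of_mul_left_right
    obtain ⟨w, rfl⟩ : ∃ w, z = 2 * w := by
      have : z % 2 = 0 := by
        rcases Int.emod_two_eq_zero_or_one z with h' | h'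
        · exact h'
        · have := odd_sq_mod h'
          have e : z ^ 2 = 2 * (8 * U ^ 4 + 2 * S ^ 2 * (2 * U - S) ^ 2) := by rw [← h]; ring
          omega
      exact ⟨z / 2, by omega⟩
    have hw : (S * (2 * U - S)) * (S * (2 * U - S)) + (2 * U ^ 2) * (2 * U ^ 2) = |w| * |w| := by
      rw [abs_mul_abs_self]; linarith
    have hU0 : U ≠ 0 := by rintro rfl; simp at hT0
    have hw0 : w ≠ 0 := by
      rintro rfl
      linarith [show (0:ℤ) ≤ 4 * S ^ 2 * (2 * U - S) ^ 2 by positivity]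
    have hodd : (S * (2 * U - S)) % 2 = 1 := by
      have : (2 * U - S) % 2 = 1 := by omega
      simp [Int.mul_emod, hS, this]
    have hcop : IsCoprime (S * (2 * U - S)) (2 * U ^ 2) := by
      apply (coprime_two_of_odd hodd).mul_right
      apply IsCoprime.pow_right
      apply hUS.symm.mul_left
      have h2 := (hUS.symm.neg_left).add_mul_left_left 2
      have e : -S + U * 2 = 2 * U - S := by ring
      rwa [e] at h2
    have hpy : PythagoreanTriple (S * (2 * U - S)) (2 * U ^ 2) |w| := hw
    obtain ⟨r, s, h1, h2, h3, h4, h5, -⟩ := hpy.coprime_classification'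
      (Int.isCoprime_iff_gcd_eq_one.1 hcop) hodd (abs_pos.2 hw0)
    have hrs : r * s = U ^ 2 := by linarith
    obtain ⟨g, e, hb, hge⟩ := sq_split (Int.isCoprime_iff_gcd_eq_one.2 h4) hrs
    have hr2 : r ^ 2 = g ^ 4 := by rcases hge with h | h <;> rw [h.1] <;> ring
    have hs2 : s ^ 2 = e ^ 4 := by rcases hge with h | h <;> rw [h.2] <;> ring
    have hcop : IsCoprime g e := by
      have h := Int.isCoprime_iff_gcd_eq_one.2 h4
      have h' : IsCoprime (r ^ 2) (s ^ 2) := h.pow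
      rw [hr2, hs2] at h'
      exact (IsCoprime.pow_iff (by norm_num) (by norm_num)).1 h'
    have hnew : e ^ 4 + e ^ 2 * g ^ 2 - g ^ 4 = (S - U) ^ 2 := by
      rw [← hr2, ← hs2]
      have : e ^ 2 * g ^ 2 = U ^ 2 := by rw [hb]; ring
      linarith
    rcases descent _ e g _ rfl hcop.symm hnew with h | h
    · exact hU0 (by rw [hb, h]; ring)
    · have : r = s := by rcases hge with h' | h' <;> linarith
      omega
  · right
    have hT8 := odd_sq_mod hT
    have hz0 : z ≠ 0 := by
      rintro rfl
      linarith [show (0:ℤ) ≤ 4 * S ^ 2 * (T - S) ^ 2 by positivity]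
    have hpy : PythagoreanTriple (T ^ 2) (2 * (S * (T - S))) |z| := by
      unfold PythagoreanTriple
      rw [abs_mul_abs_self]; linarith
    have hcop : IsCoprime (T ^ 2) (2 * (S * (T - S))) := by
      apply IsCoprime.pow_left
      apply (coprime_two_of_odd hT).mul_right
      apply hc.mul_right
      have h2 := (hc.neg_right).add_mul_left_right 1
      have e : -S + T * 1 = T - S := by ring
      rwa [e] at h2
    obtain ⟨r, s, h1, h2, h3, h4, h5, -⟩ := hpy.coprime_classification'
      (Int.isCoprime_iff_gcd_eq_one.1 hcop) (by omega) (abs_pos.2 hz0)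
    have hrs : (r + s) * (r - s) = T ^ 2 := by linarith
    obtain ⟨g, e, hbe, hge⟩ := sq_split
      (coprime_sub_add (Int.isCoprime_iff_gcd_eq_one.2 h4) h5) hrs
    have hr2 : (r + s) ^ 2 = g ^ 4 := by rcases hge with h | h <;> rw [h.1] <;> ring
    have hs2 : (r - s) ^ 2 = e ^ 4 := by rcases hge with h | h <;> rw [h.2] <;> ring
    have hcop : IsCoprime g e := by
      have h := coprime_sub_add (Int.isCoprime_iff_gcd_eq_one.2 h4) h5
      have h' : IsCoprime ((r + s) ^ 2) ((r - s) ^ 2) := h.pow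
      rw [hr2, hs2] at h'
      exact (IsCoprime.pow_iff (by norm_num) (by norm_num)).1 h'
    have hnew : e ^ 4 + e ^ 2 * g ^ 2 - g ^ 4 = (2 * S - T) ^ 2 := by
      rw [← hr2, ← hs2]
      have : e ^ 2 * g ^ 2 = T ^ 2 := by rw [hbe]; ring
      linarith
    rcases descent _ e g _ rfl hcop.symm hnew with h | h
    · exact absurd (by rw [hbe, h]; ring) hT0
    · have hs0 : s = 0 := by rcases hge with h' | h' <;> linarith
      rw [hs0] at h2
      have : S * (T - S) = 0 := by linarith
      rcases mul_eq_zero.1 this with h | h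
      · exact Or.inl h
      · exact Or.inr (by linarith)

/-- The common prime divisors of the two factors are `2`, `5`, `17`. -/
lemma prime_cases {T S A l : ℤ} (hl : Prime l) (hc : IsCoprime T S) (hA : A ^ 2 = T ^ 2 + 4 * S ^ 2)
    (hB : l ∣ T ^ 4 + 4 * S ^ 2 * (T - S) ^ 2)
    (hH : l ∣ A * ((T - 2 * S) * (T ^ 3 - 16 * S ^ 3))) : l ∣ 2 ∨ l ∣ 5 ∨ l ∣ 17 := by
  have hS : ¬ l ∣ S := by
    intro h
    have h1 : l ∣ T ^ 4 := by
      have h2 : l ∣ 4 * S ^ 2 * (T - S) ^ 2 :=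
        Dvd.dvd.mul_right (Dvd.dvd.mul_left (h.pow two_ne_zero) _) _
      exact (dvd_add_left h2).1 hB
    exact hl.not_isUnit (hc.isUnit_of_dvd' (hl.dvd_of_dvd_pow h1) h)
  have pw : ∀ n, ¬ l ∣ S ^ n := fun n h => hS (hl.dvd_of_dvd_pow h)
  rcases hl.dvd_or_dvd hH with h | h
  · obtain ⟨v, hv⟩ : l ∣ T ^ 2 + 4 * S ^ 2 := by rw [← hA]; exact h.pow two_ne_zero
    obtain ⟨w, hw⟩ := hB
    have h1 : l ∣ 2 * (2 * (S ^ 3 * (S - 2 * T))) :=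
      ⟨w - T ^ 2 * v, by linear_combination hw - T ^ 2 * hv⟩
    rcases hl.dvd_or_dvd h1 with h1 | h1
    · exact Or.inl h1
    rcases hl.dvd_or_dvd h1 with h1 | h1
    · exact Or.inl h1
    rcases hl.dvd_or_dvd h1 with h1 | h1
    · exact absurd h1 (pw _)
    obtain ⟨t, ht⟩ := h1
    have h2 : l ∣ 17 * S ^ 2 :=
      ⟨4 * v + t * (S + 2 * T), by linear_combination 4 * hv + (S + 2 * T) * ht⟩
    rcases hl.dvd_or_dvd h2 with h2 | h2
    · exact Or.inr (Or.inr h2)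
    · exact absurd h2 (pw _)
  rcases hl.dvd_or_dvd h with h | h
  · obtain ⟨v, hv⟩ := h
    obtain ⟨w, hw⟩ := hB
    have h1 : l ∣ 2 * (2 * (5 * S ^ 4)) :=
      ⟨w - v * (T ^ 3 + 2 * S * T ^ 2 + 8 * S ^ 2 * T + 8 * S ^ 3), by
        linear_combination hw - (T ^ 3 + 2 * S * T ^ 2 + 8 * S ^ 2 * T + 8 * S ^ 3) * hv⟩
    rcases hl.dvd_or_dvd h1 with h1 | h1
    · exact Or.inl h1
    rcases hl.dvd_or_dvd h1 with h1 | h1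
    · exact Or.inl h1
    rcases hl.dvd_or_dvd h1 with h1 | h1
    · exact Or.inr (Or.inl h1)
    · exact absurd h1 (pw _)
  · obtain ⟨v, hv⟩ := h
    obtain ⟨w, hw⟩ := hB
    have h1 : l ∣ 2 * (2 * (S ^ 2 * (T + S) ^ 2)) :=
      ⟨w - T * v, by linear_combination hw - T * hv⟩
    rcases hl.dvd_or_dvd h1 with h1 | h1
    · exact Or.inl h1
    rcases hl.dvd_or_dvd h1 with h1 | h1
    · exact Or.inl h1
    rcases hl.dvd_or_dvd h1 with h1 | h1
    · exact absurd h1 (pw _)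
    obtain ⟨t, ht⟩ := hl.dvd_of_dvd_pow h1
    have h2 : l ∣ 17 * S ^ 3 :=
      ⟨t * (T ^ 2 - T * S + S ^ 2) - v, by
        linear_combination (T ^ 2 - T * S + S ^ 2) * ht - hv⟩
    rcases hl.dvd_or_dvd h2 with h2 | h2
    · exact Or.inr (Or.inr h2)
    · exact absurd h2 (pw _)

lemma squarefree_dvd {b : ℕ} (hb : Squarefree b)
    (h : ∀ l : ℕ, l.Prime → l ∣ b → l = 2 ∨ l = 5 ∨ l = 17) : b ∣ 170 := by
  rw [← Nat.prod_primeFactors_of_squarefree hb]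
  have h1 : b.primeFactors ⊆ ({2, 5, 17} : Finset ℕ) := by
    intro l hl
    have := h l (Nat.prime_of_mem_primeFactors hl) (Nat.dvd_of_mem_primeFactors hl)
    simpa using this
  have := Finset.prod_dvd_prod_of_subset _ _ (fun p : ℕ => p) h1
  simpa using this

/-- Residues of `B`. -/
lemma B_mod_three (p q : ZMod 3) (h : ¬ (p = 0 ∧ q = 0)) :
    (p ^ 2 - q ^ 2) ^ 4 + 4 * (p * q) ^ 2 * ((p ^ 2 - q ^ 2) - p * q) ^ 2 = 1 := by
  revert p q; decide

lemma B_mod_three_int {p q : ℤ} (hc : IsCoprime p q) :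
    ((p ^ 2 - q ^ 2) ^ 4 + 4 * (p * q) ^ 2 * ((p ^ 2 - q ^ 2) - p * q) ^ 2) % 3 = 1 := by
  have h : ¬ ((p : ZMod 3) = 0 ∧ (q : ZMod 3) = 0) := by
    rintro ⟨h1, h2⟩
    have h1 := (ZMod.intCast_zmod_eq_zero_iff_dvd p 3).1 h1
    have h2 := (ZMod.intCast_zmod_eq_zero_iff_dvd q 3).1 h2
    have := hc.isUnit_of_dvd' h1 h2
    rw [Int.isUnit_iff] at this
    omega
  have := B_mod_three p q h
  have h2 := (ZMod.intCast_eq_intCast_iff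
    ((p ^ 2 - q ^ 2) ^ 4 + 4 * (p * q) ^ 2 * ((p ^ 2 - q ^ 2) - p * q) ^ 2) 1 3).1
    (by push_cast; exact this)
  exact h2

lemma B_mod_even {p q : ℤ} (hc : IsCoprime p q) :
    ((p ^ 2 - q ^ 2) ^ 4 + 4 * (p * q) ^ 2 * ((p ^ 2 - q ^ 2) - p * q) ^ 2) % 8 = 1 ∨
    ((p ^ 2 - q ^ 2) ^ 4 + 4 * (p * q) ^ 2 * ((p ^ 2 - q ^ 2) - p * q) ^ 2) % 32 = 4 := by
  have odd4 : ∀ a : ℤ, a % 2 = 1 → a ^ 4 % 8 = 1 := by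
    intro a ha
    have h1 := odd_sq_mod ha
    have h2 : a ^ 2 % 2 = 1 := by omega
    have h3 := odd_sq_mod h2
    rwa [← pow_mul] at h3
  have hpar : ¬ (p % 2 = 0 ∧ q % 2 = 0) := by
    rintro ⟨h1, h2⟩
    have := hc.isUnit_of_dvd' (Int.dvd_of_emod_eq_zero h1) (Int.dvd_of_emod_eq_zero h2)
    rw [Int.isUnit_iff] at this
    omega
  rcases Int.emod_two_eq_zero_or_one (p * q) with hS | hS
  · left
    have hT : (p ^ 2 - q ^ 2) % 2 = 1 := by
      rcases Int.emod_two_eq_zero_or_one p with h1 | h1 <;>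
      rcases Int.emod_two_eq_zero_or_one q with h2 | h2
      · exact absurd ⟨h1, h2⟩ hpar
      · simp [Int.sub_emod, pow_two, Int.mul_emod, h1, h2]
      · simp [Int.sub_emod, pow_two, Int.mul_emod, h1, h2]
      · simp [Int.mul_emod, h1, h2] at hS
    obtain ⟨w, hw⟩ : ∃ w, p * q = 2 * w := ⟨(p * q) / 2, by omega⟩
    rw [hw]
    have h4 := odd4 _ hT
    have e : 4 * (2 * w) ^ 2 * ((p ^ 2 - q ^ 2) - 2 * w) ^ 2
      = 8 * (2 * w ^ 2 * ((p ^ 2 - q ^ 2) - 2 * w) ^ 2) := by ring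
    rw [e]
    omega
  · right
    have hp : p % 2 = 1 := by
      rcases Int.emod_two_eq_zero_or_one p with h | h
      · simp [Int.mul_emod, h] at hS
      · exact h
    have hq : q % 2 = 1 := by
      rcases Int.emod_two_eq_zero_or_one q with h | h
      · simp [Int.mul_emod, h] at hS
      · exact h
    have hp8 := odd_sq_mod hp
    have hq8 := odd_sq_mod hq
    obtain ⟨w, hw⟩ : ∃ w, p ^ 2 - q ^ 2 = 8 * w := ⟨(p ^ 2 - q ^ 2) / 8, by omega⟩
    rw [hw]
    have h4 := odd4 _ hS
    have e : (8 * w) ^ 4 + 4 * (p * q) ^ 2 * (8 * w - p * q) ^ 2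
      = 32 * (128 * w ^ 4 + 8 * (p * q) ^ 2 * w ^ 2 - 2 * w * (p * q) ^ 3) + 4 * (p * q) ^ 4 := by
      ring
    rw [e]
    omega

lemma B_square {p q Y : ℤ} (hc : IsCoprime p q)
    (h : Y ^ 2 = ((p ^ 2 - q ^ 2) ^ 4 + 4 * (p * q) ^ 2 * ((p ^ 2 - q ^ 2) - p * q) ^ 2) *
      ((p ^ 2 + q ^ 2) * (((p ^ 2 - q ^ 2) - 2 * (p * q)) *
        ((p ^ 2 - q ^ 2) ^ 3 - 16 * (p * q) ^ 3)))) :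
    ∃ z : ℤ, (p ^ 2 - q ^ 2) ^ 4 + 4 * (p * q) ^ 2 * ((p ^ 2 - q ^ 2) - p * q) ^ 2 = z ^ 2 := by
  have hTS : IsCoprime (p ^ 2 - q ^ 2) (p * q) := by
    have h1 : IsCoprime (p ^ 2 - q ^ 2) q :=
      (IsCoprime.pow_right_iff (by norm_num)).1 (coprime_sq_sub hc)
    have h2 : IsCoprime (p ^ 2 - q ^ 2) p := by
      have h3 := (IsCoprime.pow_right_iff (by norm_num)).1 (coprime_sq_sub hc.symm)
      have h4 := h3.neg_left
      rwa [neg_sub] at h4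
    exact h2.mul_right h1
  have hA : (p ^ 2 + q ^ 2) ^ 2 = (p ^ 2 - q ^ 2) ^ 2 + 4 * (p * q) ^ 2 := by ring
  have h3 := B_mod_three_int hc
  have h8 := B_mod_even hc
  have hBpos : 0 ≤ (p ^ 2 - q ^ 2) ^ 4 + 4 * (p * q) ^ 2 * ((p ^ 2 - q ^ 2) - p * q) ^ 2 := by
    positivity
  have hpr := fun l hl => prime_cases (T := p ^ 2 - q ^ 2) (S := p * q) (l := l) hl hTS hA
  generalize (p ^ 2 + q ^ 2) * (((p ^ 2 - q ^ 2) - 2 * (p * q)) *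
        ((p ^ 2 - q ^ 2) ^ 3 - 16 * (p * q) ^ 3)) = H at *
  generalize (p ^ 2 - q ^ 2) ^ 4 + 4 * (p * q) ^ 2 * ((p ^ 2 - q ^ 2) - p * q) ^ 2 = B at *
  obtain ⟨b, s, hbs, hsf⟩ := Nat.sq_mul_squarefree B.toNat
  have hB : B = (s : ℤ) ^ 2 * b := by
    have : ((s ^ 2 * b : ℕ) : ℤ) = B := by rw [hbs]; exact Int.toNat_of_nonneg hBpos
    rw [← this]; push_cast; ring
  have hB0 : B ≠ 0 := by omega
  have hs0 : (s : ℤ) ≠ 0 := by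
    intro h0; rw [h0] at hB; simp at hB; exact hB0 hB
  have hb0 : (b : ℤ) ≠ 0 := by
    intro h0; rw [h0] at hB; simp at hB; exact hB0 hB
  have hsY : (s : ℤ) ∣ Y := by
    have : (s : ℤ) ^ 2 ∣ Y ^ 2 := ⟨b * H, by rw [h, hB]; ring⟩
    exact (Int.pow_dvd_pow_iff two_ne_zero).1 this
  obtain ⟨Y1, rfl⟩ := hsY
  have hY1 : Y1 ^ 2 = b * H := by
    have : (s : ℤ) ^ 2 * Y1 ^ 2 = s ^ 2 * (b * H) := by
      rw [hB] at h; linear_combination h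
    exact mul_left_cancel₀ (pow_ne_zero 2 hs0) this
  have hsfZ : Squarefree (b : ℤ) := Int.squarefree_natCast.2 hsf
  have hbY : (b : ℤ) ∣ Y1 := (hsfZ.dvd_pow_iff_dvd two_ne_zero).1 ⟨H, hY1⟩
  obtain ⟨Y2, rfl⟩ := hbY
  have hbH : (b : ℤ) ∣ H := by
    have : (b : ℤ) * (b * Y2 ^ 2) = b * H := by linear_combination hY1
    exact ⟨Y2 ^ 2, (mul_left_cancel₀ hb0 this).symm⟩
  have h170 : b ∣ 170 := by
    apply squarefree_dvd hsf
    intro l hl hlb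
    have hlb' : (l : ℤ) ∣ b := Int.natCast_dvd_natCast.2 hlb
    have := hpr l (Nat.prime_iff_prime_int.1 hl)
      (by rw [hB]; exact Dvd.dvd.mul_left hlb' _) (hlb'.trans hbH)
    rcases this with h | h | h
    · exact Or.inl ((Nat.prime_dvd_prime_iff_eq hl (by norm_num)).1 (by exact_mod_cast h))
    · exact Or.inr (Or.inl ((Nat.prime_dvd_prime_iff_eq hl (by norm_num)).1 (by exact_mod_cast h)))
    · exact Or.inr (Or.inr ((Nat.prime_dvd_prime_iff_eq hl (by norm_num)).1 (by exact_mod_cast h)))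
  have hmem : b ∈ Nat.divisors 170 := Nat.mem_divisors.2 ⟨h170, by norm_num⟩
  have hdiv : Nat.divisors 170 = {1, 2, 5, 10, 17, 34, 85, 170} := by rfl
  rw [hdiv] at hmem
  have hs8 : (s : ℤ) ^ 2 % 32 = 0 ∨ (s : ℤ) ^ 2 % 32 = 4 ∨ (s : ℤ) ^ 2 % 32 = 16 ∨
      (s : ℤ) ^ 2 % 8 = 1 := by
    rcases Int.emod_two_eq_zero_or_one (s : ℤ) with h | h
    · obtain ⟨w, hw⟩ : ∃ w, (s : ℤ) = 2 * w := ⟨s / 2, by omega⟩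
      rw [hw, mul_pow]
      rcases Int.emod_two_eq_zero_or_one w with h' | h'
      · obtain ⟨v, hv⟩ : ∃ v, w = 2 * v := ⟨w / 2, by omega⟩
        rw [hv, mul_pow]
        omega
      · have := odd_sq_mod h'
        omega
    · have := odd_sq_mod h
      omega
  have hs3 : (s : ℤ) ^ 2 % 3 = 0 ∨ (s : ℤ) ^ 2 % 3 = 1 := by
    have : (s : ℤ) % 3 = 0 ∨ (s : ℤ) % 3 = 1 ∨ (s : ℤ) % 3 = 2 := by omega
    rcases this with h | h | h <;> simp [pow_two, Int.mul_emod, h]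
  refine ⟨s, ?_⟩
  generalize (s : ℤ) ^ 2 = s2 at *
  simp only [Finset.mem_insert, Finset.mem_singleton] at hmem
  rcases hmem with rfl | rfl | rfl | rfl | rfl | rfl | rfl | rfl <;> push_cast at hB <;> omega

lemma int_of_sq {w : ℚ} {n : ℤ} (h : w ^ 2 = n) : ∃ Y : ℤ, (Y : ℚ) = w := by
  have h1 : IsSquare (n : ℚ) := ⟨w, by rw [← h]; ring⟩
  rw [Rat.isSquare_intCast_iff] at h1
  obtain ⟨Y, hY⟩ := h1
  rw [hY] at h
  push_cast at h
  rw [← pow_two] at h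
  rcases sq_eq_sq_iff_eq_or_eq_neg.1 h with h2 | h2
  · exact ⟨Y, h2.symm⟩
  · exact ⟨-Y, by push_cast; exact h2.symm⟩

/-- The affine rational points of the hyperelliptic curve
`y² = (x² + 1)(x⁸ − 8x⁵ + 2x⁴ + 8x³ + 1)(x² − 2x − 1)(x⁶ − 3x⁴ − 16x³ + 3x² − 1)`
are exactly `(±1, ±16)` and `(0, ±1)`. -/
theorem genus8_curve_points (x y : ℚ) :
    y ^ 2 = (x ^ 2 + 1) * (x ^ 8 - 8 * x ^ 5 + 2 * x ^ 4 + 8 * x ^ 3 + 1) *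
      ((x ^ 2 - 2 * x - 1) * (x ^ 6 - 3 * x ^ 4 - 16 * x ^ 3 + 3 * x ^ 2 - 1)) ↔
    (x = 1 ∧ y = 16) ∨ (x = 1 ∧ y = -16) ∨
    (x = -1 ∧ y = 16) ∨ (x = -1 ∧ y = -16) ∨
    (x = 0 ∧ y = 1) ∨ (x = 0 ∧ y = -1) := by
  constructor
  · intro h
    have hx : x = 1 ∨ x = -1 ∨ x = 0 := by
      have hq0 : (x.den : ℚ) ≠ 0 := by exact_mod_cast x.den_nz
      have hxq : x * x.den = x.num := Rat.mul_den_eq_num x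
      have hc : IsCoprime x.num (x.den : ℤ) := by
        rw [Int.isCoprime_iff_gcd_eq_one]
        exact x.reduced
      have hz0 : (x.den : ℤ) ≠ 0 := by exact_mod_cast x.den_nz
      have hxd : x = x.num / x.den := (Rat.num_div_den x).symm
      generalize x.num = p at *
      obtain ⟨q, hq⟩ : ∃ q : ℤ, q = (x.den : ℤ) := ⟨_, rfl⟩
      have hqq : (x.den : ℚ) = (q : ℚ) := by rw [hq]; norm_cast
      rw [hqq] at hq0 hxq hxd
      rw [← hq] at hc hz0
      have hsq : (y * q ^ 9) ^ 2 =
          ((((p ^ 2 - q ^ 2) ^ 4 + 4 * (p * q) ^ 2 * ((p ^ 2 - q ^ 2) - p * q) ^ 2) *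
      ((p ^ 2 + q ^ 2) * (((p ^ 2 - q ^ 2) - 2 * (p * q)) *
        ((p ^ 2 - q ^ 2) ^ 3 - 16 * (p * q) ^ 3))) : ℤ) : ℚ) := by
        push_cast
        rw [← hxq, mul_pow, h]
        ring
      have hex : ∃ Y : ℤ, (Y : ℚ) = y * q ^ 9 := int_of_sq hsq
      obtain ⟨Y, hY⟩ := hex
      rw [← hY] at hsq
      obtain ⟨z, hz⟩ := B_square hc (Y := Y) (by exact_mod_cast hsq)
      have hTS : IsCoprime (p ^ 2 - q ^ 2) (p * q) := by
        have h1 : IsCoprime (p ^ 2 - q ^ 2) q :=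
          (IsCoprime.pow_right_iff (by norm_num)).1 (coprime_sq_sub hc)
        have h2 : IsCoprime (p ^ 2 - q ^ 2) p := by
          have h3 := (IsCoprime.pow_right_iff (by norm_num)).1 (coprime_sq_sub hc.symm)
          have h4 := h3.neg_left
          rwa [neg_sub] at h4
        exact h2.mul_right h1
      rcases quartic_points hTS hz with h0 | h0 | h0
      · have : p ^ 2 = q ^ 2 := by linarith
        rcases sq_eq_sq_iff_eq_or_eq_neg.1 this with h1 | h1
        · left; rw [hxd, h1]; exact div_self hq0
        · right; left; rw [hxd, h1]; push_cast; rw [neg_div, div_self hq0]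
      · right; right
        rcases mul_eq_zero.1 h0 with h1 | h1
        · rw [hxd, h1]; simp
        · exact absurd h1 hz0
      · exfalso
        have hpar : ¬ (p % 2 = 0 ∧ q % 2 = 0) := by
          rintro ⟨h1, h2⟩
          have := hc.isUnit_of_dvd' (Int.dvd_of_emod_eq_zero h1) (Int.dvd_of_emod_eq_zero h2)
          rw [Int.isUnit_iff] at this
          omega
        have hm : (p ^ 2 - q ^ 2) % 2 = (p * q) % 2 := by rw [h0]
        rcases Int.emod_two_eq_zero_or_one p with h1 | h1 <;>
        rcases Int.emod_two_eq_zero_or_one q with h2 | h2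
        · exact hpar ⟨h1, h2⟩
        all_goals simp [Int.sub_emod, pow_two, Int.mul_emod, h1, h2] at hm
    rcases hx with rfl | rfl | rfl
    · have : (y - 16) * (y + 16) = 0 := by linarith
      rcases mul_eq_zero.1 this with h1 | h1
      · left; exact ⟨rfl, by linarith⟩
      · right; left; exact ⟨rfl, by linarith⟩
    · have : (y - 16) * (y + 16) = 0 := by linarith
      rcases mul_eq_zero.1 this with h1 | h1
      · right; right; left; exact ⟨rfl, by linarith⟩
      · right; right; right; left; exact ⟨rfl, by linarith⟩
    · have : (y - 1) * (y + 1) = 0 := by linarith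
      rcases mul_eq_zero.1 this with h1 | h1
      · right; right; right; right; left; exact ⟨rfl, by linarith⟩
      · right; right; right; right; right; exact ⟨rfl, by linarith⟩
  · rintro (⟨rfl, rfl⟩ | ⟨rfl, rfl⟩ | ⟨rfl, rfl⟩ | ⟨rfl, rfl⟩ | ⟨rfl, rfl⟩ | ⟨rfl, rfl⟩) <;> norm_num
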